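/- arXiv:1506.04036 — 2 statements merged into one kernel-verified Lean document; each statement's English description precedes it below -/
import Mathlib

section
/- (Duality theorem for generalized rank weights.) Let C ⊆ F_{q^m}^n be an F_{q^m}-linear code of dimension k, and write d_r = d_{R,r}(C) for 1 ≤ r ≤ k and d_s^⊥ = d_{R,s}(C^⊥) for 1 ≤ s ≤ n − k. Then {1, 2, ..., n} = {d_1, d_2, ..., d_k} ∪ {n + 1 − d_1^⊥, n + 1 − d_2^⊥, ..., n + 1 − d_{n−k}^⊥}, and this union is disjoint. -/
open Submodule Module

namespace RankPaper

variable {n : ℕ}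

/-- The coordinatewise `q^i`-th power map on `Fqm^n`. -/
def qpowMap (q i : ℕ) {Fqm : Type} [Field Fqm] (v : Fin n → Fqm) : Fin n → Fqm :=
  fun j => v j ^ q ^ i

/-- The Galois closure `D* = Σ_{i=0}^{m-1} D^{q^i}` of a subspace (as the span of the
union of the images of `D` under the coordinatewise `q^i`-power maps, `0 ≤ i < m`). -/
def galClosure (q m : ℕ) {Fqm : Type} [Field Fqm] (D : Submodule Fqm (Fin n → Fqm)) :
    Submodule Fqm (Fin n → Fqm) :=
  Submodule.span Fqm (⋃ i ∈ Finset.range m, qpowMap q i '' (D : Set (Fin n → Fqm)))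

/-- `D` is Galois closed if `D = D*`. -/
def GaloisClosed (q m : ℕ) {Fqm : Type} [Field Fqm] (D : Submodule Fqm (Fin n → Fqm)) : Prop :=
  galClosure q m D = D

/-- Rank weight of a subspace: `wt_R(D) = dim_{Fqm} D*`. -/
noncomputable def wtR (q m : ℕ) {Fqm : Type} [Field Fqm]
    (D : Submodule Fqm (Fin n → Fqm)) : ℕ :=
  finrank Fqm (galClosure q m D)

/-- Rank weight of a vector: `wt_R(c) = wt_R(span {c})`. -/
noncomputable def wtRv (q m : ℕ) {Fqm : Type} [Field Fqm] (c : Fin n → Fqm) : ℕ :=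
  wtR q m (Submodule.span Fqm ({c} : Set (Fin n → Fqm)))

/-- Hamming weight of a subspace: the number of coordinates where some element is nonzero. -/
noncomputable def wtH {Fqm : Type} [Field Fqm] (D : Submodule Fqm (Fin n → Fqm)) : ℕ :=
  {i : Fin n | ∃ d ∈ D, d i ≠ 0}.ncard

/-- `r`-th generalized rank weight of a linear code. -/
noncomputable def dR (q m : ℕ) {Fqm : Type} [Field Fqm]
    (C : Submodule Fqm (Fin n → Fqm)) (r : ℕ) : ℕ :=
  sInf { dv | ∃ V : Submodule Fqm (Fin n → Fqm),
    GaloisClosed q m V ∧ r ≤ finrank Fqm ↥(C ⊓ V) ∧ dv = finrank Fqm ↥V }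

/-- `r`-th generalized Hamming weight of a linear code. -/
noncomputable def dH {Fqm : Type} [Field Fqm]
    (C : Submodule Fqm (Fin n → Fqm)) (r : ℕ) : ℕ :=
  sInf { w | ∃ D : Submodule Fqm (Fin n → Fqm), D ≤ C ∧ finrank Fqm ↥D = r ∧ w = wtH D }

/-- `r`-th relative generalized rank weight of a nested code pair. -/
noncomputable def MR (q m : ℕ) {Fqm : Type} [Field Fqm]
    (C₁ C₂ : Submodule Fqm (Fin n → Fqm)) (r : ℕ) : ℕ :=
  sInf { dv | ∃ V : Submodule Fqm (Fin n → Fqm), GaloisClosed q m V ∧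
    r ≤ finrank Fqm ↥(C₁ ⊓ V) - finrank Fqm ↥(C₂ ⊓ V) ∧ dv = finrank Fqm ↥V }

/-- Minimum rank distance of an arbitrary (possibly nonlinear) code. -/
noncomputable def dRset (q m : ℕ) {Fqm : Type} [Field Fqm] (C : Set (Fin n → Fqm)) : ℕ :=
  sInf { w | ∃ c₁ ∈ C, ∃ c₂ ∈ C, c₁ ≠ c₂ ∧ w = wtRv q m (c₁ - c₂) }

/-- The linear functional `x ↦ Σ_j x_j y_j` (dot product with `y`). -/
def dotLin {K : Type} [Field K] (y : Fin n → K) : (Fin n → K) →ₗ[K] K :=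
  ∑ j, y j • LinearMap.proj j

/-- Orthogonal complement of a subspace with respect to the standard bilinear form. -/
def perp {K : Type} [Field K] (L : Submodule K (Fin n → K)) : Submodule K (Fin n → K) :=
  ⨅ y ∈ L, LinearMap.ker (dotLin y)

/-- The coordinatewise inclusion `Fq^n → Fqm^n`. -/
def embFq (Fq Fqm : Type) [Field Fq] [Field Fqm] [Algebra Fq Fqm] :
    (Fin n → Fq) →ₗ[Fq] (Fin n → Fqm) :=
  LinearMap.pi fun j => (Algebra.linearMap Fq Fqm).comp (LinearMap.proj j)

/-- `V_L = L ⊗ Fqm`, the `Fqm`-span of `L ⊆ Fq^n` inside `Fqm^n`. -/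
def VL {Fq : Type} (Fqm : Type) [Field Fq] [Field Fqm] [Algebra Fq Fqm]
    (L : Submodule Fq (Fin n → Fq)) : Submodule Fqm (Fin n → Fqm) :=
  Submodule.span Fqm (embFq Fq Fqm '' (L : Set (Fin n → Fq)))

/-- Rank-punctured code `C^L`: the image of `C` in `Fqm^n / V_{L^⊥}`. -/
noncomputable def punct {Fq Fqm : Type} [Field Fq] [Field Fqm] [Algebra Fq Fqm]
    (L : Submodule Fq (Fin n → Fq)) (C : Submodule Fqm (Fin n → Fqm)) :
    Submodule Fqm ((Fin n → Fqm) ⧸ VL Fqm (perp L)) :=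
  Submodule.map (VL Fqm (perp L)).mkQ C


section helpers

variable {K : Type} [Field K]

/-- Stability under a coordinatewise ring endomorphism. -/
def Stab (σ : K →+* K) (V : Submodule K (Fin n → K)) : Prop :=
  ∀ v ∈ V, (fun j => σ (v j)) ∈ V

lemma mem_perp {L : Submodule K (Fin n → K)} {x : Fin n → K} :
    x ∈ perp L ↔ ∀ y ∈ L, ∑ j, y j * x j = 0 := by
  simp [perp, dotLin, Submodule.mem_iInf, LinearMap.mem_ker]

lemma perp_eq (L : Submodule K (Fin n → K)) :
    perp L = LinearMap.BilinForm.orthogonal (Matrix.toBilin' (1 : Matrix (Fin n) (Fin n) K)) L := by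
  ext x
  rw [mem_perp, LinearMap.BilinForm.mem_orthogonal_iff]
  refine forall₂_congr fun y _ => ?_
  simp [Matrix.toBilin'_apply', dotProduct]

lemma finrank_perp (L : Submodule K (Fin n → K)) :
    finrank K (perp L) + finrank K L = n := by
  rw [perp_eq, LinearMap.BilinForm.finrank_orthogonal
    (LinearMap.BilinForm.nondegenerate_toBilin'_of_det_ne_zero' _ (by simp))]
  have := Submodule.finrank_le L
  simp at this ⊢
  omega

lemma perp_perp (L : Submodule K (Fin n → K)) : perp (perp L) = L := by
  symm
  apply Submodule.eq_of_le_of_finrank_eq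
  · intro x hx
    rw [mem_perp]
    intro y hy
    rw [mem_perp] at hy
    rw [← hy x hx]
    exact Finset.sum_congr rfl fun _ _ => mul_comm _ _
  · have := finrank_perp L
    have := finrank_perp (perp L)
    omega

lemma perp_anti {L M : Submodule K (Fin n → K)} (h : L ≤ M) : perp M ≤ perp L := by
  intro x hx
  rw [mem_perp] at *
  exact fun y hy => hx y (h hy)

lemma perp_sup (L M : Submodule K (Fin n → K)) : perp (L ⊔ M) = perp L ⊓ perp M := by
  apply le_antisymm
  · exact le_inf (perp_anti le_sup_left) (perp_anti le_sup_right)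
  · rintro x ⟨h1, h2⟩
    simp only [SetLike.mem_coe, mem_perp] at *
    intro y hy
    obtain ⟨a, ha, b, hb, rfl⟩ := Submodule.mem_sup.1 hy
    simp [add_mul, Finset.sum_add_distrib, h1 a ha, h2 b hb]

lemma finrank_dual (C V : Submodule K (Fin n → K)) :
    finrank K ↥(C ⊓ V) + n = finrank K C + finrank K V + finrank K ↥(perp C ⊓ perp V) := by
  have h1 := finrank_perp (C ⊔ V)
  have h2 := Submodule.finrank_sup_add_finrank_inf_eq C V
  rw [perp_sup] at h1
  omega

lemma Stab.perp [Finite K] {σ : K →+* K} {V : Submodule K (Fin n → K)} (h : Stab σ V) :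
    Stab σ (perp V) := by
  intro x hx
  rw [mem_perp] at *
  intro y hy
  let g : V → V := fun v => ⟨_, h v v.2⟩
  have hg : Function.Injective g := by
    intro a b hab
    ext j
    have := congrArg (fun w : V => (w : Fin n → K) j) hab
    exact σ.injective this
  obtain ⟨z, hz⟩ := Finite.surjective_of_injective hg ⟨y, hy⟩
  have hz' : y = fun j => σ (z.1 j) := (congrArg Subtype.val hz).symm
  subst hz'
  have := congrArg σ (hx z z.2)
  simpa using this

lemma Stab.up {σ : K →+* K} {V : Submodule K (Fin n → K)} (h : Stab σ V)
    (hV : finrank K V < n) : ∃ W, Stab σ W ∧ V ≤ W ∧ finrank K W = finrank K V + 1 := by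
  obtain ⟨i, hi⟩ : ∃ i, (Pi.single i 1 : Fin n → K) ∉ V := by
    by_contra! hc
    have : V = ⊤ := by
      rw [eq_top_iff]
      intro x _
      rw [pi_eq_sum_univ' x]
      refine Submodule.sum_mem _ fun i _ => V.smul_mem _ ?_
      convert! hc i using 1
    subst this
    simp at hV
  refine ⟨V ⊔ span K {Pi.single i 1}, ?_, le_sup_left, ?_⟩
  · intro v hv
    obtain ⟨a, ha, b, hb, rfl⟩ := Submodule.mem_sup.1 hv
    obtain ⟨c, rfl⟩ := Submodule.mem_span_singleton.1 hb
    refine Submodule.mem_sup.2 ⟨_, h a ha, σ c • Pi.single i 1,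
      Submodule.mem_span_singleton.2 ⟨_, rfl⟩, ?_⟩
    ext j
    by_cases hj : j = i
    · subst hj; simp
    · simp [hj]
  · have h2 := Submodule.finrank_sup_add_finrank_inf_eq V (span K {(Pi.single i 1 : Fin n → K)})
    have h3 : V ⊓ span K {(Pi.single i 1 : Fin n → K)} = ⊥ := by
      rw [← disjoint_iff]
      exact (Submodule.disjoint_span_singleton' (by simp)).2 hi
    rw [h3, finrank_bot, finrank_span_singleton (by simp)] at h2
    omega

lemma Stab.down [Finite K] {σ : K →+* K} {V : Submodule K (Fin n → K)} (h : Stab σ V)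
    (hV : 0 < finrank K V) : ∃ W, Stab σ W ∧ W ≤ V ∧ finrank K W + 1 = finrank K V := by
  have h1 := finrank_perp V
  obtain ⟨W, hW, hle, hd⟩ := h.perp.up (by omega)
  refine ⟨RankPaper.perp W, hW.perp, ?_, ?_⟩
  · have := perp_anti hle
    rwa [perp_perp] at this
  · have := finrank_perp W
    omega

/-- Maximal dimension of the intersection with a stable subspace of dimension `d`. -/
noncomputable def prof (σ : K →+* K) (C : Submodule K (Fin n → K)) (d : ℕ) : ℕ :=
  sSup {x | ∃ V, Stab σ V ∧ finrank K V = d ∧ finrank K ↥(C ⊓ V) = x}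

variable (σ : K →+* K) (C : Submodule K (Fin n → K))

lemma le_prof {V : Submodule K (Fin n → K)} (hV : Stab σ V) :
    finrank K ↥(C ⊓ V) ≤ prof σ C (finrank K V) := by
  refine le_csSup ⟨finrank K C, ?_⟩ ⟨V, hV, rfl, rfl⟩
  rintro x ⟨W, _, _, rfl⟩
  exact Submodule.finrank_mono inf_le_left

lemma exists_stab {d : ℕ} (hd : d ≤ n) :
    ∃ V : Submodule K (Fin n → K), Stab σ V ∧ finrank K V = d := by
  induction d with
  | zero =>
    refine ⟨⊥, ?_, by simp⟩
    intro v hv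
    rw [Submodule.mem_bot] at *
    subst hv
    ext j
    simp
  | succ d ih =>
    obtain ⟨V, hV, hd'⟩ := ih (by omega)
    obtain ⟨W, hW, _, h⟩ := hV.up (by omega)
    exact ⟨W, hW, by omega⟩

lemma exists_prof {d : ℕ} (hd : d ≤ n) :
    ∃ V, Stab σ V ∧ finrank K V = d ∧ finrank K ↥(C ⊓ V) = prof σ C d := by
  have : prof σ C d ∈ {x | ∃ V, Stab σ V ∧ finrank K V = d ∧ finrank K ↥(C ⊓ V) = x} := by
    refine Nat.sSup_mem ?_ ⟨finrank K C, ?_⟩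
    · obtain ⟨V, h, h'⟩ := exists_stab (K := K) σ hd
      exact ⟨_, V, h, h', rfl⟩
    · rintro x ⟨W, _, _, rfl⟩
      exact Submodule.finrank_mono inf_le_left
  exact this

lemma prof_mono {d : ℕ} (hd : d < n) : prof σ C d ≤ prof σ C (d + 1) := by
  obtain ⟨V, h1, h2, h3⟩ := exists_prof σ C hd.le
  obtain ⟨W, hW, hle, h⟩ := h1.up (by omega)
  rw [← h3, ← h2, ← h]
  exact (Submodule.finrank_mono (inf_le_inf_left _ hle)).trans (le_prof σ C hW)

lemma prof_step [Finite K] {d : ℕ} (hd : d < n) : prof σ C (d + 1) ≤ prof σ C d + 1 := by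
  obtain ⟨V, h1, h2, h3⟩ := exists_prof σ C (d := d + 1) hd
  obtain ⟨W, hW, hle, h⟩ := h1.down (by omega)
  have h4 := le_prof σ C hW
  have h5 := Submodule.finrank_sup_add_finrank_inf_eq (C ⊓ V) W
  have h6 : finrank K ↥((C ⊓ V) ⊔ W) ≤ finrank K V :=
    Submodule.finrank_mono (sup_le inf_le_right hle)
  rw [inf_assoc, inf_eq_right.2 hle] at h5
  have h7 : finrank K W = d := by omega
  rw [h7] at h4
  omega

lemma prof_zero : prof σ C 0 = 0 := by
  obtain ⟨V, h1, h2, h3⟩ := exists_prof σ C (d := 0) (by omega)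
  have : finrank K ↥(C ⊓ V) ≤ finrank K V := Submodule.finrank_mono inf_le_right
  omega

lemma prof_top : prof σ C n = finrank K C := by
  obtain ⟨V, h1, h2, h3⟩ := exists_prof σ C (d := n) le_rfl
  have : V = ⊤ := Submodule.eq_top_of_finrank_eq (by simpa using h2)
  subst this
  rw [← h3, inf_top_eq]

lemma prof_dual_le [Finite K] {d e : ℕ} (hd : d + e = n) :
    prof σ C d + n ≤ finrank K C + d + prof σ (perp C) e := by
  obtain ⟨V, h1, h2, h3⟩ := exists_prof σ C (d := d) (by omega)
  have h4 := finrank_dual C V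
  have h5 := le_prof σ (perp C) h1.perp
  have h6 := finrank_perp V
  have h7 : finrank K (perp V) = e := by omega
  rw [h7] at h5
  omega

lemma prof_dual [Finite K] {d e : ℕ} (hd : d + e = n) :
    prof σ C d + n = finrank K C + d + prof σ (perp C) e := by
  have h1 := prof_dual_le σ C hd
  have h2 := prof_dual_le σ (perp C) (d := e) (e := d) (by omega)
  have h3 := finrank_perp C
  rw [perp_perp] at h2
  omega

lemma image_sInf (f : ℕ → ℕ) (n k : ℕ) (h0 : f 0 = 0) (hn : f n = k)
    (hm : ∀ d < n, f d ≤ f (d + 1)) (hs : ∀ d < n, f (d + 1) ≤ f d + 1) (d : ℕ) :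
    (∃ r, (1 ≤ r ∧ r ≤ k) ∧ sInf {d | d ≤ n ∧ r ≤ f d} = d) ↔
      ∃ e, d = e + 1 ∧ e < n ∧ f (e + 1) = f e + 1 := by
  have mono : ∀ b ≤ n, ∀ a ≤ b, f a ≤ f b := by
    intro b hb a hab
    induction b, hab using Nat.le_induction with
    | base => exact le_rfl
    | succ b _ ih => exact (ih (by omega)).trans (hm b (by omega))
  constructor
  · rintro ⟨r, ⟨h1, h2⟩, h⟩
    have hmem : d ∈ {d | d ≤ n ∧ r ≤ f d} := by
      rw [← h]
      exact Nat.sInf_mem ⟨n, le_rfl, by omega⟩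
    obtain ⟨hdn, hr⟩ := hmem
    rcases d with _ | e
    · omega
    refine ⟨e, rfl, by omega, ?_⟩
    have := hs e (by omega)
    have h3 : e ∉ {d | d ≤ n ∧ r ≤ f d} := Nat.notMem_of_lt_sInf (by omega)
    have h4 : ¬ r ≤ f e := fun h' => h3 ⟨by omega, h'⟩
    omega
  · rintro ⟨e, rfl, he, h⟩
    refine ⟨f (e + 1), ⟨by omega, hn ▸ mono n le_rfl _ (by omega)⟩, ?_⟩
    apply le_antisymm
    · exact Nat.sInf_le ⟨by omega, le_rfl⟩
    · refine le_csInf ⟨e + 1, by omega, le_rfl⟩ ?_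
      rintro b ⟨hb, hb'⟩
      by_contra hlt
      have := mono e (by omega) b (by omega)
      omega

lemma galoisClosed_iff {q m : ℕ} (hm : 0 < m) (hσ : ∀ x, σ x = x ^ q)
    (h1 : m = 1 → ∀ x, σ x = x) (V : Submodule K (Fin n → K)) :
    GaloisClosed q m V ↔ Stab σ V := by
  constructor
  · intro h v hv
    by_cases hm1 : m = 1
    · simpa [h1 hm1] using hv
    · rw [← h]
      refine Submodule.subset_span ?_
      simp only [Set.mem_iUnion]
      refine ⟨1, by simp; omega, v, hv, ?_⟩
      ext j
      simp [qpowMap, hσ]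
  · intro h
    have hi : ∀ i, ∀ v ∈ V, qpowMap q i v ∈ V := by
      intro i
      induction i with
      | zero => intro v hv; unfold qpowMap; simpa using hv
      | succ i ih =>
        intro v hv
        have := h _ (ih v hv)
        unfold qpowMap at *
        simpa [hσ, ← pow_mul, ← pow_succ] using this
    apply le_antisymm
    · refine Submodule.span_le.2 ?_
      simp only [Set.iUnion_subset_iff]
      rintro i _ _ ⟨v, hv, rfl⟩
      exact hi i v hv
    · intro v hv
      refine Submodule.subset_span ?_
      simp only [Set.mem_iUnion]
      exact ⟨0, by simpa using hm, v, hv, by ext j; simp [qpowMap]⟩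

lemma dR_eq [Finite K] {q m : ℕ}
    (hG : ∀ V : Submodule K (Fin n → K), GaloisClosed q m V ↔ Stab σ V) (r : ℕ) :
    dR q m C r = sInf {d | d ≤ n ∧ r ≤ prof σ C d} := by
  unfold dR
  congr 1
  ext d
  constructor
  · rintro ⟨V, h1, h2, rfl⟩
    refine ⟨by simpa using Submodule.finrank_le V, h2.trans (le_prof σ C ((hG V).1 h1))⟩
  · rintro ⟨h1, h2⟩
    obtain ⟨V, a, b, c⟩ := exists_prof σ C h1
    exact ⟨V, (hG V).2 a, by omega, b.symm⟩

lemma mem_image_dR [Finite K] {q m : ℕ}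
    (hG : ∀ V : Submodule K (Fin n → K), GaloisClosed q m V ↔ Stab σ V) (d : ℕ) :
    (∃ r, (1 ≤ r ∧ r ≤ finrank K C) ∧ dR q m C r = d) ↔
      ∃ e, d = e + 1 ∧ e < n ∧ prof σ C (e + 1) = prof σ C e + 1 := by
  simp only [dR_eq σ C hG]
  exact image_sInf (prof σ C) n _ (prof_zero σ C) (prof_top σ C)
    (fun d hd => prof_mono σ C hd) (fun d hd => prof_step σ C hd) d

lemma duality_aux [Finite K] {q m : ℕ}
    (hG : ∀ V : Submodule K (Fin n → K), GaloisClosed q m V ↔ Stab σ V) (d : ℕ) :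
    (∃ s, (1 ≤ s ∧ s ≤ n - finrank K C) ∧ n + 1 - dR q m (perp C) s = d) ↔
      ∃ e, d = e + 1 ∧ e < n ∧ prof σ C (e + 1) = prof σ C e := by
  have hp := finrank_perp C
  have hk : n - finrank K C = finrank K (perp C) := by omega
  rw [hk]
  have key := mem_image_dR σ (perp C) hG
  constructor
  · rintro ⟨s, hs, rfl⟩
    obtain ⟨e, he, hen, h⟩ := (key _).1 ⟨s, hs, rfl⟩
    refine ⟨n - 1 - e, by omega, by omega, ?_⟩
    have a1 := prof_dual σ C (d := n - 1 - e + 1) (e := e) (by omega)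
    have a2 := prof_dual σ C (d := n - 1 - e) (e := e + 1) (by omega)
    omega
  · rintro ⟨e, rfl, hen, h⟩
    have a1 := prof_dual σ C (d := e + 1) (e := n - 1 - e) (by omega)
    have a2 := prof_dual σ C (d := e) (e := n - 1 - e + 1) (by omega)
    obtain ⟨s, hs, hs'⟩ := (key (n - 1 - e + 1)).2 ⟨n - 1 - e, rfl, by omega, by omega⟩
    exact ⟨s, hs, by omega⟩

end helpers

/-- duality theorem for generalized rank weights:
`{1,…,n}` is the disjoint union of `{d_{R,r}(C) : 1 ≤ r ≤ k}` and
`{n + 1 − d_{R,s}(C^⊥) : 1 ≤ s ≤ n − k}`. -/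
theorem stmt14 (q m n k : ℕ) (Fq Fqm : Type) [Field Fq] [Field Fqm] [Algebra Fq Fqm]
    [Finite Fqm] (hq : Nat.card Fq = q) (hm : finrank Fq Fqm = m)
    (C : Submodule Fqm (Fin n → Fqm)) (hk : finrank Fqm C = k) :
    ((Finset.Icc 1 k).image (fun r => dR q m C r) ∪
        (Finset.Icc 1 (n - k)).image (fun s => n + 1 - dR q m (perp C) s))
      = Finset.Icc 1 n ∧
    Disjoint ((Finset.Icc 1 k).image (fun r => dR q m C r))
      ((Finset.Icc 1 (n - k)).image (fun s => n + 1 - dR q m (perp C) s)) := by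
  have : Finite Fq := Finite.of_injective _ (algebraMap Fq Fqm).injective
  have := Fintype.ofFinite Fq
  have hmpos : 0 < m := by
    rw [← hm]
    exact Module.finrank_pos
  let σ : Fqm →+* Fqm := (FiniteField.frobeniusAlgHom Fq Fqm).toRingHom
  have hσ : ∀ x, σ x = x ^ q := by
    intro x
    rw [← hq, Nat.card_eq_fintype_card]
    rfl
  have h1 : m = 1 → ∀ x, σ x = x := by
    intro h x
    have := Fintype.ofFinite Fqm
    have hc : Fintype.card Fqm = q := by
      rw [Module.card_eq_pow_finrank (K := Fq) (V := Fqm), hm, h, pow_one,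
        ← Nat.card_eq_fintype_card, hq]
    rw [hσ, ← hc, FiniteField.pow_card]
  have hG := galoisClosed_iff (n := n) σ hmpos hσ h1
  have A := mem_image_dR σ C hG
  have B := duality_aux σ C hG
  subst hk
  constructor
  · ext d
    simp only [Finset.mem_union, Finset.mem_image, Finset.mem_Icc]
    rw [A, B]
    constructor
    · rintro (⟨e, rfl, h, _⟩ | ⟨e, rfl, h, _⟩) <;> omega
    · rintro ⟨h, h'⟩
      obtain ⟨e, rfl⟩ : ∃ e, d = e + 1 := ⟨d - 1, by omega⟩
      have a1 := prof_mono σ C (d := e) h'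
      have a2 := prof_step σ C (d := e) h'
      rcases Nat.lt_or_ge (prof σ C e) (prof σ C (e + 1)) with hlt | hge
      · exact Or.inl ⟨e, rfl, h', by omega⟩
      · exact Or.inr ⟨e, rfl, h', by omega⟩
  · rw [Finset.disjoint_left]
    intro d
    simp only [Finset.mem_image, Finset.mem_Icc]
    rw [A, B]
    rintro ⟨e, rfl, h, h'⟩ ⟨e', he, _, h''⟩
    obtain rfl : e = e' := by omega
    omega

end RankPaper
end

section
/- Let C ⊆ F_{q^m}^n be an arbitrary (not necessarily linear) code with at least two elements and let t, ρ be nonnegative integers. (i) If d_R(C) > 2t + ρ, then for every positive integer N, every matrix A ∈ F_q^{N×n} with rank(A) ≥ n − ρ, all c, c' ∈ C and all e, e' ∈ F_{q^m}^N with wt_R(e) ≤ t and wt_R(e') ≤ t: if c A^T + e = c' A^T + e', then c = c' (so the minimum-discrepancy decoder is infallible against t errors and ρ erasures). (ii) Conversely, if d_R(C) ≤ 2t + ρ and ρ ≤ n, then there exist a positive integer N, a matrix A ∈ F_q^{N×n} with rank(A) = n − ρ, distinct c, c' ∈ C, and e, e' ∈ F_{q^m}^N with wt_R(e) ≤ t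 and wt_R(e') ≤ t such that c A^T + e = c' A^T + e'. -/
open Submodule Module

namespace RankPaper

variable {n : ℕ}

section helpers

variable {Fq Fqm : Type} [Field Fq] [Field Fqm] [Algebra Fq Fqm]

lemma finrank_VL_le (L : Submodule Fq (Fin n → Fq)) :
    finrank Fqm (VL Fqm L) ≤ finrank Fq L := by
  let b := finBasis Fq L
  have h : VL Fqm L ≤ Submodule.span Fqm
      (Set.range fun k => embFq Fq Fqm (b k : Fin n → Fq)) := by
    refine Submodule.span_le.2 ?_
    rintro _ ⟨x, hx, rfl⟩
    have h1 : x = ∑ k, b.repr ⟨x, hx⟩ k • (b k : Fin n → Fq) := by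
      have := congrArg Subtype.val (b.sum_repr ⟨x, hx⟩)
      rw [Submodule.coe_sum] at this
      exact this.symm
    rw [SetLike.mem_coe, h1, map_sum]
    refine Submodule.sum_mem _ fun k _ => ?_
    rw [map_smul, ← algebraMap_smul Fqm]
    exact Submodule.smul_mem _ _ (Submodule.subset_span ⟨k, rfl⟩)
  refine (Submodule.finrank_mono h).trans ?_
  refine (finrank_range_le_card _).trans ?_
  simp

lemma linInd_emb {ι : Type} [Fintype ι] (x : ι → Fin n → Fq) (hx : LinearIndependent Fq x) :
    LinearIndependent Fqm (fun k => embFq Fq Fqm (x k)) := by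
  rw [Fintype.linearIndependent_iff] at hx ⊢
  intro g hg i
  rw [← Module.forall_dual_apply_eq_zero_iff Fq]
  intro φ
  refine hx (fun k => φ (g k)) ?_ i
  ext j
  have h1 := congrArg φ (congrFun hg j)
  simp only [Finset.sum_apply, Pi.smul_apply, smul_eq_mul, Pi.zero_apply, map_zero, map_sum] at h1 ⊢
  rw [← h1]
  refine Finset.sum_congr rfl fun k _ => ?_
  have : g k * embFq Fq Fqm (x k) j = x k j • g k := by
    simp [embFq, Algebra.smul_def, mul_comm]
  rw [this, map_smul, smul_eq_mul, mul_comm]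

lemma finrank_comap_emb_le (V : Submodule Fqm (Fin n → Fqm)) :
    finrank Fq ((V.restrictScalars Fq).comap (embFq Fq Fqm)) ≤ finrank Fqm V := by
  let L := (V.restrictScalars Fq).comap (embFq (n := n) Fq Fqm)
  let b := finBasis Fq L
  have h0 : LinearIndependent Fq (fun k => (b k : Fin n → Fq)) :=
    b.linearIndependent.map' L.subtype (Submodule.ker_subtype L)
  have h1 := linInd_emb (Fqm := Fqm) _ h0
  have h2 : LinearIndependent Fqm
      (fun k => (⟨embFq Fq Fqm (b k : Fin n → Fq), (b k).2⟩ : V)) :=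
    LinearIndependent.of_comp V.subtype h1
  simpa using h2.fintype_card_le_finrank

variable [Finite Fqm]

lemma exists_frob (i : ℕ) : ∃ σ : Fqm →ₐ[Fq] Fqm, ∀ x, σ x = x ^ (Nat.card Fq) ^ i := by
  have := Finite.of_injective _ (FaithfulSMul.algebraMap_injective Fq Fqm)
  have := Fintype.ofFinite Fq
  refine ⟨(FiniteField.frobeniusAlgHom Fq Fqm) ^ i, fun x => ?_⟩
  rw [AlgHom.coe_pow, FiniteField.coe_frobeniusAlgHom, pow_iterate, Fintype.card_eq_nat_card]

lemma wtRv_le (m : ℕ) (c : Fin n → Fqm) (L : Submodule Fq (Fin n → Fq))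
    (h : ∀ φ : Fqm →ₗ[Fq] Fq, (fun j => φ (c j)) ∈ L) :
    wtRv (Nat.card Fq) m c ≤ finrank Fq L := by
  refine le_trans (Submodule.finrank_mono ?_) (finrank_VL_le (Fqm := Fqm) L)
  refine Submodule.span_le.2 ?_
  simp only [Set.iUnion_subset_iff]
  rintro i - _ ⟨v, hv, rfl⟩
  obtain ⟨a, rfl⟩ := Submodule.mem_span_singleton.1 hv
  obtain ⟨σ, hσ⟩ := exists_frob (Fq := Fq) (Fqm := Fqm) i
  let b := finBasis Fq Fqm
  have : qpowMap (Nat.card Fq) i (a • c) =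
      ∑ k, (σ a * σ (b k)) • embFq Fq Fqm (fun j => b.coord k (c j)) := by
    ext j
    simp only [qpowMap, ← hσ, Pi.smul_apply, smul_eq_mul, Finset.sum_apply, map_mul]
    conv_lhs => rw [← b.sum_repr (c j)]
    rw [map_sum, Finset.mul_sum]
    refine Finset.sum_congr rfl fun k _ => ?_
    rw [map_smul]
    simp [embFq, Algebra.smul_def]
    ring
  rw [SetLike.mem_coe, this]
  exact Submodule.sum_mem _ fun k _ => Submodule.smul_mem _ _
    (Submodule.subset_span ⟨_, h (b.coord k), rfl⟩)

lemma exists_supp (c : Fin n → Fqm) : ∃ L : Submodule Fq (Fin n → Fq),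
    finrank Fq L ≤ wtRv (Nat.card Fq) (finrank Fq Fqm) c ∧
    ∀ φ : Fqm →ₗ[Fq] Fq, (fun j => φ (c j)) ∈ L := by
  refine ⟨_, finrank_comap_emb_le _, fun φ => ?_⟩
  have := Finite.of_injective _ (FaithfulSMul.algebraMap_injective Fq Fqm)
  let T := LinearMap.BilinForm.toDual (Algebra.traceForm Fq Fqm) (traceForm_nondegenerate Fq Fqm)
  obtain ⟨a, rfl⟩ := T.surjective φ
  rw [Submodule.mem_comap, Submodule.restrictScalars_mem]
  have : embFq Fq Fqm (fun j => T a (c j)) = ∑ i ∈ Finset.range (finrank Fq Fqm),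
      qpowMap (Nat.card Fq) i (a • c) := by
    ext j
    simp only [T, embFq, LinearMap.BilinForm.toDual_def, LinearMap.pi_apply, LinearMap.comp_apply,
      LinearMap.proj_apply, Algebra.linearMap_apply, Algebra.traceForm_apply,
      FiniteField.algebraMap_trace_eq_sum_pow, Finset.sum_apply, qpowMap, Pi.smul_apply,
      smul_eq_mul]
  rw [this]
  refine Submodule.sum_mem _ fun i hi => Submodule.subset_span ?_
  exact Set.mem_biUnion hi ⟨_, Submodule.smul_mem _ _ (Submodule.mem_span_singleton_self c), rfl⟩

lemma coord_mulVec {N : ℕ} (A : Matrix (Fin N) (Fin n) Fq) (c : Fin n → Fqm)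
    (φ : Fqm →ₗ[Fq] Fq) :
    (fun j => φ ((A.map (algebraMap Fq Fqm)).mulVec c j)) = A.mulVec (fun j => φ (c j)) := by
  ext j
  simp [Matrix.mulVec, dotProduct, ← Algebra.smul_def]

end helpers

section linalg

variable {K V : Type} [Field K] [AddCommGroup V] [Module K V] [FiniteDimensional K V]

lemma exists_sub_finrank (W : Submodule K V) (d : ℕ) (hd : d ≤ finrank K W) :
    ∃ U ≤ W, finrank K U = d := by
  let b := finBasis K W
  have hli : LinearIndependent K (fun k : Fin d => (b (Fin.castLE hd k) : V)) :=
    (b.linearIndependent.map' W.subtype (Submodule.ker_subtype W)).comp _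
      (Fin.castLE_injective hd)
  refine ⟨Submodule.span K (Set.range _), ?_, (finrank_span_eq_card hli).trans (by simp)⟩
  rw [Submodule.span_le]
  rintro _ ⟨k, rfl⟩
  exact (b _).2

lemma exists_sup_finrank (W : Submodule K V) (d : ℕ) (hd : finrank K W ≤ d)
    (hd' : d ≤ finrank K V) : ∃ U, W ≤ U ∧ finrank K U = d := by
  obtain ⟨W', hW⟩ := Submodule.exists_isCompl W
  have h := Submodule.finrank_add_eq_of_isCompl hW
  obtain ⟨U, hU, hUd⟩ := exists_sub_finrank W' (d - finrank K W) (by omega)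
  refine ⟨W ⊔ U, le_sup_left, ?_⟩
  have h2 := Submodule.finrank_sup_add_finrank_inf_eq W U
  have h3 : W ⊓ U = ⊥ := (hW.disjoint.mono_right hU).eq_bot
  rw [h3, finrank_bot] at h2
  omega

lemma exists_proj (W : Submodule K V) : ∃ f : V →ₗ[K] V, LinearMap.ker f = W ∧
    ∀ x, x - f x ∈ W := by
  obtain ⟨p, hp⟩ := W.subtype.exists_leftInverse_of_injective (Submodule.ker_subtype W)
  refine ⟨LinearMap.id - W.subtype ∘ₗ p, ?_, fun x => by simp⟩
  ext x
  simp only [LinearMap.mem_ker, LinearMap.sub_apply, LinearMap.id_apply, LinearMap.comp_apply,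
    Submodule.subtype_apply, sub_eq_zero]
  constructor
  · intro h
    rw [h]
    exact (p x).2
  · intro h
    have := LinearMap.congr_fun hp ⟨x, h⟩
    exact (congrArg Subtype.val this).symm

lemma finrank_map_ker (f : V →ₗ[K] V) (W : Submodule K V) :
    finrank K (W.map f) + finrank K (W ⊓ LinearMap.ker f : Submodule K V) = finrank K W := by
  have h := (f.domRestrict W).finrank_range_add_finrank_ker
  rw [LinearMap.range_domRestrict, LinearMap.ker_domRestrict] at h
  rw [← h, ← Submodule.finrank_map_subtype_eq, Submodule.map_comap_subtype]

lemma finrank_comap_le' {V' : Type} [AddCommGroup V'] [Module K V'] [FiniteDimensional K V']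
    (f : V →ₗ[K] V') (M : Submodule K V') :
    finrank K (M.comap f) ≤ finrank K M + finrank K (LinearMap.ker f) := by
  have h := (f.domRestrict (M.comap f)).finrank_range_add_finrank_ker
  rw [LinearMap.range_domRestrict, LinearMap.ker_domRestrict, 
    ← Submodule.finrank_map_subtype_eq, Submodule.map_comap_subtype] at h
  have h1 := Submodule.finrank_mono (Submodule.map_comap_le f M)
  have h2 := Submodule.finrank_mono (inf_le_right : M.comap f ⊓ LinearMap.ker f ≤ _)
  omega

end linalg

/-- correction of `t` errors and `ρ` erasures. (i) If `d_R(C) > 2t + ρ`,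
the decoder is infallible for every transfer matrix of rank at least `n − ρ`;
(ii) otherwise some transfer matrix of rank `n − ρ` admits a decoding ambiguity. -/
theorem stmt19 (q m n t ρ : ℕ) (Fq Fqm : Type) [Field Fq] [Field Fqm] [Algebra Fq Fqm]
    [Finite Fqm] (hq : Nat.card Fq = q) (hm : finrank Fq Fqm = m)
    (C : Set (Fin n → Fqm)) (hC : C.Nontrivial) :
    (2 * t + ρ < dRset q m C →
      ∀ N : ℕ, 0 < N → ∀ A : Matrix (Fin N) (Fin n) Fq, n - ρ ≤ A.rank →
        ∀ c ∈ C, ∀ c' ∈ C, ∀ e e' : Fin N → Fqm,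
          wtRv q m e ≤ t → wtRv q m e' ≤ t →
          (A.map (algebraMap Fq Fqm)).mulVec c + e
            = (A.map (algebraMap Fq Fqm)).mulVec c' + e' →
          c = c') ∧
    (dRset q m C ≤ 2 * t + ρ → ρ ≤ n →
      ∃ (N : ℕ) (A : Matrix (Fin N) (Fin n) Fq), 0 < N ∧ A.rank = n - ρ ∧
        ∃ c ∈ C, ∃ c' ∈ C, c ≠ c' ∧ ∃ e e' : Fin N → Fqm,
          wtRv q m e ≤ t ∧ wtRv q m e' ≤ t ∧
          (A.map (algebraMap Fq Fqm)).mulVec c + e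
            = (A.map (algebraMap Fq Fqm)).mulVec c' + e') := by
  subst hq hm
  constructor
  · intro hd N _ A hA c hc c' hc' e e' he he' heq
    by_contra hne
    obtain ⟨L, hL, hL'⟩ := exists_supp (Fq := Fq) e
    obtain ⟨M, hM, hM'⟩ := exists_supp (Fq := Fq) e'
    have h1 := wtRv_le (finrank Fq Fqm) (c - c') ((M ⊔ L).comap A.mulVecLin) (by
      intro φ
      rw [Submodule.mem_comap, Matrix.mulVecLin_apply, ← coord_mulVec, Matrix.mulVec_sub]
      have : (A.map (algebraMap Fq Fqm)).mulVec c - (A.map (algebraMap Fq Fqm)).mulVec c'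
          = e' - e := by
        rw [sub_eq_sub_iff_add_eq_add, heq, add_comm]
      rw [this]
      have h2 : (fun j => φ ((e' - e) j)) = (fun j => φ (e' j)) - (fun j => φ (e j)) := by
        ext j; simp
      rw [h2]
      exact Submodule.sub_mem _ (Submodule.mem_sup_left (hM' φ)) (Submodule.mem_sup_right (hL' φ)))
    have h2 := finrank_comap_le' A.mulVecLin (M ⊔ L)
    have h3 := Submodule.finrank_add_le_finrank_add_finrank M L
    have h4 := A.mulVecLin.finrank_range_add_finrank_ker
    rw [finrank_fin_fun] at h4
    have h5 : dRset (Nat.card Fq) (finrank Fq Fqm) C ≤ _ :=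
      Nat.sInf_le ⟨c, hc, c', hc', hne, rfl⟩
    unfold Matrix.rank at hA
    omega
  · intro hd hρ
    have hn : 0 < n := by
      rcases Nat.eq_zero_or_pos n with rfl | h
      · exact absurd (Set.subsingleton_of_subsingleton) (Set.not_subsingleton_iff.2 hC)
      · exact h
    obtain ⟨a, ha, b, hb, hab⟩ := hC
    obtain ⟨c, hc, c', hc', hne, hw⟩ := Nat.sInf_mem (s := { w | ∃ c₁ ∈ C, ∃ c₂ ∈ C, c₁ ≠ c₂ ∧
      w = wtRv (Nat.card Fq) (finrank Fq Fqm) (c₁ - c₂) }) ⟨_, a, ha, b, hb, hab, rfl⟩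
    unfold dRset at hd
    rw [hw] at hd
    obtain ⟨L, hL, hL'⟩ := exists_supp (Fq := Fq) (c - c')
    obtain ⟨K, hK, hLK⟩ : ∃ K : Submodule Fq (Fin n → Fq), finrank Fq K = ρ ∧
        finrank Fq L ≤ finrank Fq (L ⊓ K : Submodule Fq (Fin n → Fq)) + 2 * t := by
      rcases le_total (finrank Fq L) ρ with h | h
      · obtain ⟨K, h1, h2⟩ := exists_sup_finrank L ρ h (by simpa using hρ)
        refine ⟨K, h2, ?_⟩
        rw [inf_eq_left.2 h1]; omega
      · obtain ⟨K, h1, h2⟩ := exists_sub_finrank L ρ h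
        refine ⟨K, h2, ?_⟩
        rw [inf_eq_right.2 h1]; omega
    obtain ⟨f, hf, -⟩ := exists_proj K
    have hM := finrank_map_ker f L
    rw [hf] at hM
    obtain ⟨M₁, hM₁, hM₁d⟩ := exists_sub_finrank (L.map f) (min t (finrank Fq (L.map f)))
      (min_le_right _ _)
    obtain ⟨g, hg, hg'⟩ := exists_proj M₁
    have hM₂ := finrank_map_ker g (L.map f)
    rw [hg, inf_eq_right.2 hM₁] at hM₂
    let A := LinearMap.toMatrix' f
    let G := LinearMap.toMatrix' g
    have hA : ∀ x, A.mulVec x = f x := fun x => LinearMap.toMatrix'_mulVec f x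
    have hG : ∀ x, G.mulVec x = g x := fun x => LinearMap.toMatrix'_mulVec g x
    let y := (A.map (algebraMap Fq Fqm)).mulVec (c - c')
    let z := (G.map (algebraMap Fq Fqm)).mulVec y
    have hy : ∀ φ : Fqm →ₗ[Fq] Fq, (fun j => φ (y j)) ∈ L.map f := by
      intro φ
      rw [coord_mulVec, hA]
      exact ⟨_, hL' φ, rfl⟩
    refine ⟨n, A, hn, ?_, c, hc, c', hc', hne, -z, y - z, ?_, ?_, ?_⟩
    · have h4 := f.finrank_range_add_finrank_ker
      rw [finrank_fin_fun, hf, hK] at h4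
      have : A.mulVecLin = f := LinearMap.ext hA
      unfold Matrix.rank
      rw [this]
      omega
    · refine (wtRv_le _ _ ((L.map f).map g) fun φ => ?_).trans (by omega)
      have h2 : (fun j => φ ((-z) j)) = -(fun j => φ (z j)) := by
        ext j; simp
      rw [h2, coord_mulVec, hG]
      exact Submodule.neg_mem _ ⟨_, hy φ, rfl⟩
    · refine (wtRv_le _ _ M₁ fun φ => ?_).trans (by omega)
      have h2 : (fun j => φ ((y - z) j)) = (fun j => φ (y j)) - (fun j => φ (z j)) := by
        ext j; simp
      have h3 : (fun j => φ (z j)) = g (fun j => φ (y j)) := by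
        rw [coord_mulVec, hG]
      rw [h2, h3]
      exact hg' _
    · simp only [y, Matrix.mulVec_sub]
      abel

end RankPaper
end
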